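/- For online bin stretching with m = 2 bins, for every probability p ∈ [0,1] and every pair of deterministic online algorithms A₁, A₂, the supremum over instances I of p·f(I,A₁(I)) + (1−p)·f(I,A₂(I)) is at least 29/24; in other words, no randomized algorithm from the class 𝓜₂ has competitive ratio smaller than 29/24. -/

import Mathlib

/-!
The adversary commits to a strategy against the pair `(A₁, A₂)`: a finite tree of item sizes, all
multiples of `1 / g`, branching on the bins into which the two algorithms put the current item.
A leaf prescribes a fixed list of final items, after which each algorithm has at least the load
obtained from the best (even offline) placement of those items on top of its current bins.

The expected payoff is affine in `p`, so a strategy whose leaves reach `29 / 24` at both ends of an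
interval of probabilities works on the whole interval. Exchanging the algorithms allows `1 / 2 ≤ p`,
and four strategies then suffice:

* `g = 9` for `p ∈ [1/2, 9/16]`,
* `g = 21` for `p ∈ [9/16, 7/12]`,
* `g = 16` for `p ∈ [7/12, 5/8]`,
* `g = 3` for `p ∈ [5/8, 1]` (the classical `4/3` bound, directed at `A₁` only).

`Strategy.check` is a decidable test that a strategy achieves the bound, `Strategy.check_sound`
proves it correct, and the kernel evaluates it on the four strategies.
-/

open scoped BigOperators

namespace BinStretch

def Fits (m : ℕ) (I : List ℝ) : Prop :=
  ∃ σ : Fin I.length → Fin m,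
    ∀ b : Fin m, ∑ i ∈ Finset.univ.filter fun i => σ i = b, I.get i ≤ 1

def IsInstance (m : ℕ) (I : List ℝ) : Prop :=
  (∀ a ∈ I, 0 < a ∧ a ≤ 1) ∧ Fits m I

noncomputable def payoff (m : ℕ) (I : List ℝ) (D : Fin I.length → Fin m) : ℝ :=
  ⨆ b : Fin m, ∑ i ∈ Finset.univ.filter fun i => D i = b, I.get i

noncomputable def prob {m : ℕ} (A : List ℝ → PMF (Fin m)) (I : List ℝ)
    (D : Fin I.length → Fin m) : ℝ :=
  ∏ i : Fin I.length, ((A (I.take (i.1 + 1))) (D i)).toReal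

noncomputable def expPayoff (m : ℕ) (A : List ℝ → PMF (Fin m)) (I : List ℝ) : ℝ :=
  ∑ D : Fin I.length → Fin m, prob A I D * payoff m I D

def detRun {m : ℕ} (A : List ℝ → Fin m) (I : List ℝ) : Fin I.length → Fin m :=
  fun i => A (I.take (i.1 + 1))

end BinStretch

namespace BinStretch

/-! ### Loads of the bins along a run -/

/-- The load of bin `b` after the deterministic algorithm `A` has processed `I`. -/
noncomputable def load (A : List ℝ → Fin 2) (I : List ℝ) (b : Fin 2) : ℝ :=
  ∑ i ∈ Finset.univ.filter fun i => detRun A I i = b, I.get i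

lemma load_eq_range (A : List ℝ → Fin 2) (I : List ℝ) (b : Fin 2) :
    load A I b =
      ∑ i ∈ Finset.range I.length, if A (I.take (i + 1)) = b then I.getD i 0 else 0 := by
  rw [load, Finset.sum_filter, Finset.sum_range]
  refine Finset.sum_congr rfl fun i _ => ?_
  rw [List.getD_eq_getElem _ _ i.2]
  rfl

lemma load_append (A : List ℝ → Fin 2) (I : List ℝ) (x : ℝ) (b : Fin 2) :
    load A (I ++ [x]) b = load A I b + if A (I ++ [x]) = b then x else 0 := by
  rw [load_eq_range, load_eq_range, List.length_append, List.length_singleton,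
    Finset.sum_range_succ]
  congr 1
  · refine Finset.sum_congr rfl fun i hi => ?_
    have hi' : i < I.length := Finset.mem_range.1 hi
    rw [List.take_append_of_le_length (by omega), List.getD_append _ _ _ _ hi']
  · rw [List.take_of_length_le (by simp)]
    simp

lemma load_le_payoff (A : List ℝ → Fin 2) (I : List ℝ) (b : Fin 2) :
    load A I b ≤ payoff 2 I (detRun A I) :=
  le_ciSup (f := fun b => ∑ i ∈ Finset.univ.filter fun i => detRun A I i = b, I.get i)
    (Set.finite_range _).bddAbove b

/-- No assignment of an instance for two bins loads a bin by more than the total size, which is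
at most `2`. -/
lemma payoff_le_two {I : List ℝ} (hI : IsInstance 2 I) (D : Fin I.length → Fin 2) :
    payoff 2 I D ≤ 2 := by
  obtain ⟨hpos, σ, hσ⟩ := hI
  have hnn : ∀ i : Fin I.length, 0 ≤ I.get i := fun i => (hpos _ (List.get_mem I i)).1.le
  have htot : ∑ i, I.get i ≤ 2 := by
    have h := Finset.sum_fiberwise (Finset.univ : Finset (Fin I.length)) σ I.get
    rw [Fin.sum_univ_two] at h
    linarith [hσ 0, hσ 1]
  refine ciSup_le fun b => le_trans ?_ htot
  exact Finset.sum_le_sum_of_subset_of_nonneg (Finset.filter_subset _ _) fun i _ _ => hnn i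

/-- The real item list encoded by a list of multiples of `1 / g`. -/
noncomputable def scale (g : ℕ) (H : List ℕ) : List ℝ := H.map fun k : ℕ => (k : ℝ) / g

/-- After the items `H` (in units of `1 / g`) the two bins of `A` carry loads `x` and `y`,
in some order. -/
def HasLoads (A : List ℝ → Fin 2) (g : ℕ) (H : List ℕ) (x y : ℕ) : Prop :=
  ∃ b : Fin 2, load A (scale g H) b = (x : ℝ) / g ∧ load A (scale g H) (1 - b) = (y : ℝ) / g

lemma HasLoads.nil (A : List ℝ → Fin 2) (g : ℕ) : HasLoads A g [] 0 0 := by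
  refine ⟨0, ?_, ?_⟩ <;> rw [load_eq_range] <;> simp [scale]

lemma HasLoads.swap {A : List ℝ → Fin 2} {g : ℕ} {H : List ℕ} {x y : ℕ}
    (h : HasLoads A g H x y) : HasLoads A g H y x := by
  obtain ⟨b, h₁, h₂⟩ := h
  exact ⟨1 - b, h₂, by rwa [sub_sub_cancel]⟩

lemma HasLoads.step {A : List ℝ → Fin 2} {g : ℕ} {H : List ℕ} {x y : ℕ}
    (h : HasLoads A g H x y) (k : ℕ) :
    HasLoads A g (H ++ [k]) (x + k) y ∨ HasLoads A g (H ++ [k]) x (y + k) := by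
  obtain ⟨b, h₁, h₂⟩ := h
  have hs : scale g (H ++ [k]) = scale g H ++ [(k : ℝ) / g] := by simp [scale]
  have hne : (1 - b : Fin 2) ≠ b := (by decide : ∀ b : Fin 2, 1 - b ≠ b) b
  have hcase : ∀ c : Fin 2, c = b ∨ c = 1 - b :=
    (by decide : ∀ b c : Fin 2, c = b ∨ c = 1 - b) b
  rcases hcase (A (scale g H ++ [(k : ℝ) / g])) with hc | hc
  · refine Or.inl ⟨b, ?_, ?_⟩ <;> rw [hs, load_append, hc]
    · rw [if_pos rfl, h₁]; push_cast; ring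
    · rw [if_neg hne.symm, h₂, add_zero]
  · refine Or.inr ⟨b, ?_, ?_⟩ <;> rw [hs, load_append, hc]
    · rw [if_neg hne, h₁, add_zero]
    · rw [if_pos rfl, h₂]; push_cast; ring

/-- When the bins are equally loaded, the two outcomes of a step coincide. -/
lemma HasLoads.step' {A : List ℝ → Fin 2} {g : ℕ} {H : List ℕ} {x y : ℕ}
    (h : HasLoads A g H x y) (k : ℕ) :
    HasLoads A g (H ++ [k]) (x + k) y ∨ (x ≠ y ∧ HasLoads A g (H ++ [k]) x (y + k)) := by
  rcases h.step k with h' | h'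
  · exact Or.inl h'
  · by_cases hxy : x = y
    · subst hxy; exact Or.inl h'.swap
    · exact Or.inr ⟨hxy, h'⟩

/-! ### Non-adaptive endings -/

/-- The smallest possible maximum load after placing the items `s` on bins loaded `x` and `y`. -/
def forced (x y : ℕ) : List ℕ → ℕ
  | [] => max x y
  | k :: s => min (forced (x + k) y s) (forced x (y + k) s)

lemma HasLoads.forced_le {A : List ℝ → Fin 2} {g : ℕ} (s : List ℕ) :
    ∀ {H : List ℕ} {x y : ℕ}, HasLoads A g H x y →
      (forced x y s : ℝ) / g ≤ payoff 2 (scale g (H ++ s)) (detRun A (scale g (H ++ s))) := by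
  induction s with
  | nil =>
    rintro H x y ⟨b, h₁, h₂⟩
    rw [List.append_nil]
    rcases max_choice x y with hm | hm <;> rw [forced, hm]
    · rw [← h₁]; exact load_le_payoff _ _ _
    · rw [← h₂]; exact load_le_payoff _ _ _
  | cons k s ih =>
    intro H x y h
    have happ : H ++ k :: s = (H ++ [k]) ++ s := by simp
    rw [happ, forced]
    rcases h.step k with h' | h' <;> refine le_trans ?_ (ih h') <;> gcongr
    · exact min_le_left _ _
    · exact min_le_right _ _

/-- Whether the items can be added to bins loaded `a` and `b` without exceeding capacity `g`. -/
def packs (g : ℕ) : List ℕ → ℕ → ℕ → Bool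
  | [], a, b => decide (a ≤ g) && decide (b ≤ g)
  | k :: l, a, b => packs g l (a + k) b || packs g l a (b + k)

lemma sum_cons (I : List ℝ) (x : ℝ) (σ : Fin I.length → Fin 2) (c b : Fin 2) :
    ∑ i : Fin (x :: I).length,
        (if (Fin.cons c σ : Fin (I.length + 1) → Fin 2) i = b then (x :: I).get i else 0) =
      (if c = b then x else 0) + ∑ i, if σ i = b then I.get i else 0 :=
  Fin.sum_univ_succ (n := I.length) _

lemma packs_sound {g : ℕ} (hg : 0 < g) (l : List ℕ) :
    ∀ a b : ℕ, packs g l a b = true → ∃ σ : Fin (scale g l).length → Fin 2,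
      (a : ℝ) / g + ∑ i, (if σ i = 0 then (scale g l).get i else 0) ≤ 1 ∧
      (b : ℝ) / g + ∑ i, (if σ i = 1 then (scale g l).get i else 0) ≤ 1 := by
  have hg' : (0 : ℝ) < g := by exact_mod_cast hg
  induction l with
  | nil =>
    intro a b h
    simp only [packs, Bool.and_eq_true, decide_eq_true_eq] at h
    have hz : ∀ f : Fin (scale g []).length → ℝ, ∑ i, f i = 0 := fun f => Fin.sum_univ_zero f
    refine ⟨fun _ => 0, ?_, ?_⟩ <;> rw [hz, add_zero, div_le_one hg']
    · exact_mod_cast h.1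
    · exact_mod_cast h.2
  | cons k l ih =>
    intro a b h
    simp only [packs, Bool.or_eq_true] at h
    have hs : scale g (k :: l) = (k : ℝ) / g :: scale g l := rfl
    rw [hs]
    rcases h with h | h <;> obtain ⟨σ, h₁, h₂⟩ := ih _ _ h <;> push_cast at h₁ h₂
    · refine ⟨(Fin.cons 0 σ : Fin ((scale g l).length + 1) → Fin 2), ?_, ?_⟩ <;> rw [sum_cons]
      · rw [if_pos rfl, ← add_assoc, ← add_div]; exact h₁
      · rw [if_neg (by decide), zero_add]; exact h₂
    · refine ⟨(Fin.cons 1 σ : Fin ((scale g l).length + 1) → Fin 2), ?_, ?_⟩ <;> rw [sum_cons]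
      · rw [if_neg (by decide), zero_add]; exact h₁
      · rw [if_pos rfl, ← add_assoc, ← add_div]; exact h₂

lemma isInstance_scale {g : ℕ} (hg : 0 < g) {l : List ℕ}
    (hpos : ∀ k ∈ l, 0 < k ∧ k ≤ g) (h : packs g l 0 0 = true) : IsInstance 2 (scale g l) := by
  have hg' : (0 : ℝ) < g := by exact_mod_cast hg
  refine ⟨?_, ?_⟩
  · intro a ha
    obtain ⟨k, hk, rfl⟩ : ∃ k ∈ l, (k : ℝ) / g = a := List.mem_map.1 ha
    obtain ⟨h₁, h₂⟩ := hpos k hk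
    exact ⟨div_pos (by exact_mod_cast h₁) hg', (div_le_one hg').2 (by exact_mod_cast h₂)⟩
  · obtain ⟨σ, h₁, h₂⟩ := packs_sound hg l 0 0 h
    refine ⟨σ, fun b => ?_⟩
    rw [Finset.sum_filter]
    fin_cases b
    · simpa using h₁
    · simpa using h₂

/-! ### Adversary strategies -/

/-- An adversary strategy against two algorithms, with item sizes in units of `1 / g`.
`finish s` presents the items `s` regardless of the answers. `play k t₁₁ t₁₂ t₂₁ t₂₂` presents an
item of size `k` and continues with `tᵢⱼ` if `A₁` puts it into its `i`-th and `A₂` into its `j`-th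
bin. -/
inductive Strategy where
  | finish (s : List ℕ)
  | play (k : ℕ) (t₁₁ t₁₂ t₂₁ t₂₂ : Strategy)

/-- A placeholder for branches identical to an earlier one, the bins involved being equally
loaded. -/
abbrev Strategy.skip : Strategy := .finish []

/-- `t.check g m n H x y u v`: from the state where the items `H` have been presented, the bins of
`A₁` are loaded `x, y` and those of `A₂` are loaded `u, v`, every ending of `t` is an instance and
has expected payoff at least `29 / 24 = 58 / 48`, both for `p = m / 48` and for `p = n / 48`. -/
def Strategy.check (g m n : ℕ) : Strategy → List ℕ → ℕ → ℕ → ℕ → ℕ → Bool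
  | .finish s, H, x, y, u, v =>
    (H ++ s).all (fun k => decide (0 < k ∧ k ≤ g)) && packs g (H ++ s) 0 0 &&
      decide (58 * g ≤ m * forced x y s + (48 - m) * forced u v s) &&
      decide (58 * g ≤ n * forced x y s + (48 - n) * forced u v s)
  | .play k t₁₁ t₁₂ t₂₁ t₂₂, H, x, y, u, v =>
    t₁₁.check g m n (H ++ [k]) (x + k) y (u + k) v &&
      (decide (u = v) || t₁₂.check g m n (H ++ [k]) (x + k) y u (v + k)) &&
      (decide (x = y) || t₂₁.check g m n (H ++ [k]) x (y + k) (u + k) v) &&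
      (decide (x = y) || decide (u = v) || t₂₂.check g m n (H ++ [k]) x (y + k) u (v + k))

/-- The payoff bound at an ending: an affine function of `p` that is large at both ends of an
interval is large throughout it. -/
lemma bound_of_endpoints {g m n a b : ℕ} (hg : 0 < g) (hm : m ≤ 48) (hn : n ≤ 48) {p : ℝ}
    (hmp : (m : ℝ) / 48 ≤ p) (hpn : p ≤ (n : ℝ) / 48)
    (h₁ : 58 * g ≤ m * a + (48 - m) * b) (h₂ : 58 * g ≤ n * a + (48 - n) * b) :
    (29 : ℝ) / 24 ≤ p * ((a : ℝ) / g) + (1 - p) * ((b : ℝ) / g) := by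
  have hg' : (0 : ℝ) < g := by exact_mod_cast hg
  have h₁' : (58 : ℝ) * g ≤ m * a + (48 - m) * b := by
    have h : ((58 * g : ℕ) : ℝ) ≤ ((m * a + (48 - m) * b : ℕ) : ℝ) := by exact_mod_cast h₁
    push_cast [hm] at h; exact h
  have h₂' : (58 : ℝ) * g ≤ n * a + (48 - n) * b := by
    have h : ((58 * g : ℕ) : ℝ) ≤ ((n * a + (48 - n) * b : ℕ) : ℝ) := by exact_mod_cast h₂
    push_cast [hn] at h; exact h
  have key : (29 : ℝ) / 24 * g ≤ p * a + (1 - p) * b := by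
    rcases le_total (b : ℝ) a with hab | hab
    · nlinarith [mul_le_mul_of_nonneg_right hmp (sub_nonneg.2 hab)]
    · nlinarith [mul_le_mul_of_nonneg_right hpn (sub_nonneg.2 hab)]
  have e : p * ((a : ℝ) / g) + (1 - p) * ((b : ℝ) / g) = (p * a + (1 - p) * b) / g := by ring
  rw [e, le_div_iff₀ hg']
  exact key

/-- Some instance has expected payoff at least `29 / 24` for the mixture of `A₁` and `A₂`. -/
def Beaten (p : ℝ) (A₁ A₂ : List ℝ → Fin 2) : Prop :=
  ∃ I : List ℝ, IsInstance 2 I ∧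
    (29 : ℝ) / 24 ≤ p * payoff 2 I (detRun A₁ I) + (1 - p) * payoff 2 I (detRun A₂ I)

lemma Strategy.check_sound {g m n : ℕ} (hg : 0 < g) (hm : m ≤ 48) (hn : n ≤ 48) {p : ℝ}
    (hmp : (m : ℝ) / 48 ≤ p) (hpn : p ≤ (n : ℝ) / 48) {A₁ A₂ : List ℝ → Fin 2} (t : Strategy) :
    ∀ {H : List ℕ} {x y u v : ℕ}, t.check g m n H x y u v = true →
      HasLoads A₁ g H x y → HasLoads A₂ g H u v → Beaten p A₁ A₂ := by
  have hp0 : 0 ≤ p := le_trans (by positivity) hmp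
  have hp1 : p ≤ 1 := by
    have : (n : ℝ) ≤ 48 := by exact_mod_cast hn
    linarith
  induction t with
  | finish s =>
    intro H x y u v hc h₁ h₂
    simp only [Strategy.check, Bool.and_eq_true, decide_eq_true_eq, List.all_eq_true] at hc
    obtain ⟨⟨⟨hpos, hpack⟩, hlo⟩, hhi⟩ := hc
    refine ⟨scale g (H ++ s), isInstance_scale hg hpos hpack, ?_⟩
    refine (bound_of_endpoints hg hm hn hmp hpn hlo hhi).trans ?_
    exact add_le_add (mul_le_mul_of_nonneg_left (h₁.forced_le s) hp0)
      (mul_le_mul_of_nonneg_left (h₂.forced_le s) (sub_nonneg.2 hp1))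
  | play k t₁₁ t₁₂ t₂₁ t₂₂ ih₁₁ ih₁₂ ih₂₁ ih₂₂ =>
    intro H x y u v hc h₁ h₂
    simp only [Strategy.check, Bool.and_eq_true, Bool.or_eq_true, decide_eq_true_eq] at hc
    obtain ⟨⟨⟨c₁₁, c₁₂⟩, c₂₁⟩, c₂₂⟩ := hc
    rcases h₁.step' k with h₁' | ⟨hxy, h₁'⟩ <;> rcases h₂.step' k with h₂' | ⟨huv, h₂'⟩
    · exact ih₁₁ c₁₁ h₁' h₂'
    · exact ih₁₂ (c₁₂.resolve_left huv) h₁' h₂'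
    · exact ih₂₁ (c₂₁.resolve_left hxy) h₁' h₂'
    · exact ih₂₂ (c₂₂.resolve_left (by tauto)) h₁' h₂'

/-! ### The four strategies -/

open Strategy

/-- The strategy with unit `1 / 9`, used for `p ∈ [1/2, 9/16]`. -/
def strategy9 : Strategy :=
  play 1
    (play 1
      (play 2
        (finish [7, 7])
        (play 2
          (finish [6, 6]) skip
          (finish [9, 3]) skip)
        (play 2
          (finish [6, 6])
          (finish [9, 3]) skip skip)
        (finish [9, 5]))
      (play 3
        (play 1
          (finish [6, 6])
          (finish [6, 6])
          (finish [6, 6])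
          (play 2
            (finish [5, 5])
            (finish [9, 1])
            (finish [9, 1])
            (finish [9, 1]))) skip
        (play 3
          (finish [9, 1])
          (finish [9, 1])
          (finish [5, 5])
          (finish [9, 1])) skip)
      (play 3
        (play 1
          (finish [6, 6])
          (finish [6, 6])
          (finish [6, 6])
          (play 2
            (finish [5, 5])
            (finish [9, 1])
            (finish [9, 1])
            (finish [9, 1])))
        (play 3
          (finish [9, 1])
          (finish [5, 5])
          (finish [9, 1])
          (finish [9, 1])) skip skip)
      (play 2
        (play 2
          (finish [6, 6])
          (finish [9, 3])
          (finish [9, 3])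
          (finish [9, 3])) skip skip skip)) skip skip skip

/-- The strategy with unit `1 / 21`, used for `p ∈ [9/16, 7/12]`. -/
def strategy21 : Strategy :=
  play 4
    (play 4
      (play 3
        (play 3
          (finish [15, 13])
          (finish [15, 13])
          (finish [14, 14])
          (play 4
            (finish [13, 11])
            (finish [21, 3])
            (finish [21, 3])
            (finish [21, 3])))
        (play 3
          (finish [15, 13])
          (finish [14, 14])
          (play 4
            (finish [13, 11])
            (finish [21, 3])
            (finish [21, 3])
            (finish [21, 3]))
          (play 2
            (play 2
              (finish [12, 12])
              (finish [21, 3])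
              (finish [21, 3])
              (finish [21, 3]))
            (finish [21, 5])
            (finish [21, 5])
            (finish [21, 5])))
        (play 5
          (finish [14, 12])
          (play 2
            (finish [12, 12])
            (finish [21, 3])
            (finish [21, 3])
            (finish [21, 3]))
          (finish [21, 5])
          (finish [21, 5]))
        (play 5
          (finish [13, 13])
          (finish [21, 5])
          (finish [21, 5])
          (finish [21, 5])))
      (play 7
        (finish [14, 13]) skip
        (finish [21, 6]) skip)
      (play 8
        (finish [13, 13])
        (finish [21, 5]) skip skip)
      (play 2
        (play 9
          (finish [12, 11])
          (finish [21, 2])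
          (finish [21, 2])
          (finish [21, 2])) skip skip skip)) skip skip skip

/-- The strategy with unit `1 / 16`, used for `p ∈ [7/12, 5/8]`. -/
def strategy16 : Strategy :=
  play 3
    (play 3
      (play 2
        (play 2
          (finish [12, 10])
          (finish [11, 11])
          (finish [11, 11])
          (play 4
            (finish [10, 8])
            (finish [16, 2])
            (finish [16, 2])
            (finish [16, 2])))
        (play 2
          (finish [11, 11])
          (finish [11, 11])
          (play 4
            (finish [10, 8])
            (finish [16, 2])
            (finish [16, 2])
            (finish [16, 2]))
          (play 4
            (finish [9, 9])
            (finish [16, 2])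
            (finish [16, 2])
            (finish [16, 2])))
        (play 4
          (finish [11, 9])
          (play 2
            (finish [9, 9])
            (finish [16, 2])
            (finish [16, 2])
            (finish [16, 2]))
          (finish [16, 4])
          (finish [16, 4]))
        (play 4
          (finish [10, 10])
          (finish [16, 4])
          (finish [16, 4])
          (finish [16, 4])))
      (play 5
        (finish [11, 10]) skip
        (finish [16, 5]) skip)
      (play 6
        (finish [10, 10])
        (finish [16, 4]) skip skip)
      (play 2
        (play 7
          (finish [9, 8])
          (finish [16, 1])
          (finish [16, 1])
          (finish [16, 1])) skip skip skip)) skip skip skip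

/-- The strategy with unit `1 / 3`, used for `p ∈ [5/8, 1]`. -/
def strategy3 : Strategy :=
  play 1
    (play 1
      (finish [2, 2])
      (finish [2, 2])
      (finish [3, 1])
      (finish [3, 1])) skip skip skip

/-- The four strategies together cover all probabilities in `[1/2, 1]`. -/
lemma beaten_of_half_le {p : ℝ} (hp : 1 / 2 ≤ p) (hp1 : p ≤ 1) (A₁ A₂ : List ℝ → Fin 2) :
    Beaten p A₁ A₂ := by
  rcases le_total p (9 / 16) with h₁ | h₁
  · exact strategy9.check_sound (g := 9) (m := 24) (n := 27) (by norm_num) (by norm_num)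
      (by norm_num) (by norm_num; linarith) (by norm_num; linarith) (by decide +kernel)
      (.nil _ _) (.nil _ _)
  rcases le_total p (7 / 12) with h₂ | h₂
  · exact strategy21.check_sound (g := 21) (m := 27) (n := 28) (by norm_num) (by norm_num)
      (by norm_num) (by norm_num; linarith) (by norm_num; linarith) (by decide +kernel)
      (.nil _ _) (.nil _ _)
  rcases le_total p (5 / 8) with h₃ | h₃
  · exact strategy16.check_sound (g := 16) (m := 28) (n := 30) (by norm_num) (by norm_num)
      (by norm_num) (by norm_num; linarith) (by norm_num; linarith) (by decide +kernel)
      (.nil _ _) (.nil _ _)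
  · exact strategy3.check_sound (g := 3) (m := 30) (n := 48) (by norm_num) (by norm_num)
      (by norm_num) (by norm_num; linarith) (by norm_num; linarith) (by decide +kernel)
      (.nil _ _) (.nil _ _)

lemma beaten {p : ℝ} (hp0 : 0 ≤ p) (hp1 : p ≤ 1) (A₁ A₂ : List ℝ → Fin 2) :
    Beaten p A₁ A₂ := by
  rcases le_total (1 / 2) p with h | h
  · exact beaten_of_half_le h hp1 A₁ A₂
  · obtain ⟨I, hI, hb⟩ :=
      beaten_of_half_le (p := 1 - p) (by linarith) (by linarith) A₂ A₁
    exact ⟨I, hI, by linarith⟩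

end BinStretch

theorem M2_lower_bound_two_bins (p : ℝ) (hp0 : 0 ≤ p) (hp1 : p ≤ 1)
    (A₁ A₂ : List ℝ → Fin 2) :
    (29 : ℝ) / 24 ≤ ⨆ I : {I : List ℝ // BinStretch.IsInstance 2 I},
      (p * BinStretch.payoff 2 I.1 (BinStretch.detRun A₁ I.1)
        + (1 - p) * BinStretch.payoff 2 I.1 (BinStretch.detRun A₂ I.1)) := by
  obtain ⟨I, hI, hb⟩ := BinStretch.beaten hp0 hp1 A₁ A₂
  -- Boundedness matters here: the supremum of an unbounded set of reals would be `0`.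
  refine le_trans hb (le_ciSup (f := fun I : {I : List ℝ // BinStretch.IsInstance 2 I} =>
    p * BinStretch.payoff 2 I.1 (BinStretch.detRun A₁ I.1)
      + (1 - p) * BinStretch.payoff 2 I.1 (BinStretch.detRun A₂ I.1)) ?_ ⟨I, hI⟩)
  refine ⟨2, ?_⟩
  rintro _ ⟨J, rfl⟩
  have h₁ := BinStretch.payoff_le_two J.2 (BinStretch.detRun A₁ J.1)
  have h₂ := BinStretch.payoff_le_two J.2 (BinStretch.detRun A₂ J.1)
  have h₃ := mul_le_mul_of_nonneg_left h₁ hp0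
  have h₄ := mul_le_mul_of_nonneg_left h₂ (sub_nonneg.2 hp1)
  dsimp only
  linarith
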